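/- Let α ≥ 0 and let x₀ > 0 satisfy α ≤ g(x₀), where g(x) = (1 + x)·ln(1 + 1/x)/√(2x + 1). Let (Ω, μ) be a probability space and let X : Ω → ℝ be an integrable random variable with 0 < X(ω) ≤ x₀ for almost every ω. Then E[f_α(X)] ≥ f_α(E[X]), where f_α(x) = ln(1 + 1/x) − α·√(2x + 1)/(1 + x). In particular, taking X = 1/γ for a random SINR γ, the ergodic finite-blocklength rate E[f_α(1/γ)] is lower bounded by f_α(1/E[1/γ]). -/

import Mathlib

open MeasureTheory

/-- The threshold function `g(x) = (1 + x) · ln(1 + 1/x) / √(2x + 1)` for `x > 0`. -/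
noncomputable def g (x : ℝ) : ℝ := (1 + x) * Real.log (1 + 1 / x) / Real.sqrt (2 * x + 1)

/-- The finite-blocklength rate as a function of the inverse SINR:
`f_α(x) = ln(1 + 1/x) − α·√(2x + 1)/(1 + x)`. -/
noncomputable def fα (α x : ℝ) : ℝ :=
  Real.log (1 + 1 / x) - α * Real.sqrt (2 * x + 1) / (1 + x)

/-!
Writing `s = √(2x + 1)`, the second derivative of `f_α` is
`(2x + 1) / (x(1 + x))² - α (3x² - 1) / (s(1 + x))³`. Since `ln(1 + t) ≤ t`, the condition
`α ≤ g(x₀)` forces `α ≤ (1 + 1/x₀) / √(2x₀ + 1)`, a bound that decreases in `x₀` and hence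
holds at every `x ≤ x₀`; it makes the negative term at most `3x / (s⁴(1 + x)²)`, and
`3x³ ≤ (2x + 1)³` then gives convexity. As `f_α(X)` need not be integrable, Jensen's inequality
is obtained by integrating a supporting line of `f_α` at the mean.
-/

open Set

section Jensen

variable {Ω : Type*} [MeasurableSpace Ω] {μ : Measure Ω} {X : Ω → ℝ} {s : Set ℝ} {φ : ℝ → ℝ}

lemma ofReal_integral_le_lintegral_ofReal (Y : Ω → ℝ) :
    ENNReal.ofReal (∫ ω, Y ω ∂μ) ≤ ∫⁻ ω, ENNReal.ofReal (Y ω) ∂μ := by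
  by_cases hY : Integrable Y μ
  · calc ENNReal.ofReal (∫ ω, Y ω ∂μ)
      _ ≤ ENNReal.ofReal (∫ ω, max (Y ω) 0 ∂μ) :=
        ENNReal.ofReal_le_ofReal (integral_mono hY hY.pos_part fun ω ↦ le_max_left _ _)
      _ = ∫⁻ ω, ENNReal.ofReal (max (Y ω) 0) ∂μ :=
        ofReal_integral_eq_lintegral_ofReal hY.pos_part (ae_of_all μ fun ω ↦ le_max_right _ _)
      _ = ∫⁻ ω, ENNReal.ofReal (Y ω) ∂μ := by simp
  · simp [integral_undef hY]

lemma exists_supporting_line_of_convexOn {m : ℝ} (hφ : ConvexOn ℝ s φ) (hm : m ∈ interior s) :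
    ∃ c, ∀ x ∈ s, φ m + c * (x - m) ≤ φ x := by
  refine ⟨derivWithin φ (Ioi m) m, fun x hx ↦ ?_⟩
  rcases lt_trichotomy x m with hxm | rfl | hmx
  · have h : slope φ x m ≤ derivWithin φ (Ioi m) m :=
      (hφ.slope_le_leftDeriv_of_mem_interior hx hm hxm).trans
        (hφ.leftDeriv_le_rightDeriv_of_mem_interior hm)
    rw [slope_def_field, div_le_iff₀ (sub_pos.mpr hxm)] at h
    linarith
  · simp
  · have h : derivWithin φ (Ioi m) m ≤ slope φ m x :=
      hφ.rightDeriv_le_slope_of_mem_interior hm hx hmx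
    rw [slope_def_field, le_div_iff₀ (sub_pos.mpr hmx)] at h
    linarith

variable [IsProbabilityMeasure μ]

lemma ae_eq_integral_or_integral_mem_interior_of_convex (hs : Convex ℝ s) (hX : Integrable X μ)
    (hXs : ∀ᵐ ω ∂μ, X ω ∈ s) :
    X =ᵐ[μ] Function.const Ω (∫ ω, X ω ∂μ) ∨ ∫ ω, X ω ∂μ ∈ interior s := by
  have hcl : StrictConvex ℝ (closure s) := hs.closure.ordConnected.strictConvex
  have h := hcl.ae_eq_const_or_average_mem_interior isClosed_closure
    (hXs.mono fun ω hω ↦ subset_closure hω) hX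
  rw [average_eq_integral] at h
  refine h.imp_right fun hmem ↦ ?_
  have hs_nontrivial : s.Nontrivial := by
    by_contra hsub
    exact not_nontrivial_iff.mpr (not_nontrivial_iff.mp hsub).closure
      (hs.closure.nontrivial_iff_nonempty_interior.mpr ⟨_, hmem⟩)
  rwa [hs.interior_closure_eq_interior_of_nonempty_interior
    (hs.nontrivial_iff_nonempty_interior.mp hs_nontrivial)] at hmem

theorem ofReal_map_integral_le_lintegral_of_convexOn (hφ : ConvexOn ℝ s φ)
    (hX : Integrable X μ) (hXs : ∀ᵐ ω ∂μ, X ω ∈ s) :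
    ENNReal.ofReal (φ (∫ ω, X ω ∂μ)) ≤ ∫⁻ ω, ENNReal.ofReal (φ (X ω)) ∂μ := by
  set m := ∫ ω, X ω ∂μ with hm
  rcases ae_eq_integral_or_integral_mem_interior_of_convex hφ.1 hX hXs with hconst | hint
  · have h : ∀ᵐ ω ∂μ, ENNReal.ofReal (φ (X ω)) = ENNReal.ofReal (φ m) :=
      hconst.mono fun ω hω ↦ by rw [hω, Function.const_apply]
    exact (lintegral_eq_const h).ge
  · obtain ⟨c, hc⟩ := exists_supporting_line_of_convexOn hφ hint
    have hline : ∫ ω, (φ m + c * (X ω - m)) ∂μ = φ m := by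
      have hXm : Integrable (fun ω ↦ X ω - m) μ := hX.sub (integrable_const m)
      rw [integral_add (integrable_const _) (hXm.const_mul c), integral_const_mul,
        integral_sub hX (integrable_const m)]
      simp [← hm]
    calc ENNReal.ofReal (φ m)
      _ = ENNReal.ofReal (∫ ω, (φ m + c * (X ω - m)) ∂μ) := by rw [hline]
      _ ≤ ∫⁻ ω, ENNReal.ofReal (φ m + c * (X ω - m)) ∂μ := ofReal_integral_le_lintegral_ofReal _
      _ ≤ ∫⁻ ω, ENNReal.ofReal (φ (X ω)) ∂μ :=
        lintegral_mono_ae (hXs.mono fun ω hω ↦ ENNReal.ofReal_le_ofReal (hc _ hω))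

end Jensen

section Convexity

variable {α x x₀ : ℝ}

lemma hasDerivAt_log_one_add_one_div (hx : x ≠ 0) (hx' : 1 + x ≠ 0) :
    HasDerivAt (fun y ↦ Real.log (1 + 1 / y)) (-(x * (1 + x))⁻¹) x := by
  have hdiv : 1 + x⁻¹ = (1 + x) / x := by rw [add_div, div_self hx, one_div, add_comm]
  have hne : 1 + x⁻¹ ≠ 0 := hdiv ▸ div_ne_zero hx' hx
  simp only [one_div]
  refine (((hasDerivAt_inv hx).const_add 1).log hne).congr_deriv ?_
  rw [hdiv]
  field_simp

lemma hasDerivAt_neg_inv_mul_one_add (hx : x ≠ 0) (hx' : 1 + x ≠ 0) :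
    HasDerivAt (fun y ↦ -(y * (1 + y))⁻¹) ((2 * x + 1) / (x * (1 + x)) ^ 2) x := by
  have hmul : HasDerivAt (fun y ↦ y * (1 + y)) (1 * (1 + x) + x * 1) x :=
    (hasDerivAt_id' x).mul ((hasDerivAt_id' x).const_add 1)
  refine (hmul.fun_inv (mul_ne_zero hx hx')).fun_neg.congr_deriv ?_
  ring

lemma hasDerivAt_sqrt_two_mul_add_one (hx : 0 < 2 * x + 1) :
    HasDerivAt (fun y ↦ √(2 * y + 1)) (√(2 * x + 1))⁻¹ x := by
  have hlin : HasDerivAt (fun y ↦ 2 * y + 1) (2 * 1) x :=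
    ((hasDerivAt_id' x).const_mul 2).add_const 1
  refine (hlin.sqrt hx.ne').congr_deriv ?_
  field_simp

lemma hasDerivAt_sqrt_div_one_add (hx : 0 < 2 * x + 1) :
    HasDerivAt (fun y ↦ √(2 * y + 1) / (1 + y)) (-(x / (√(2 * x + 1) * (1 + x) ^ 2))) x := by
  have hx' : 1 + x ≠ 0 := by linarith
  have hs : √(2 * x + 1) ≠ 0 := (Real.sqrt_pos.mpr hx).ne'
  have hsq : √(2 * x + 1) ^ 2 = 2 * x + 1 := Real.sq_sqrt hx.le
  refine ((hasDerivAt_sqrt_two_mul_add_one hx).fun_div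
    ((hasDerivAt_id' x).const_add 1) hx').congr_deriv ?_
  field_simp
  linear_combination -hsq

lemma hasDerivAt_neg_div_sqrt_mul_one_add_sq (hx : 0 < 2 * x + 1) :
    HasDerivAt (fun y ↦ -(y / (√(2 * y + 1) * (1 + y) ^ 2)))
      ((3 * x ^ 2 - 1) / (√(2 * x + 1) * (1 + x)) ^ 3) x := by
  have hx' : 1 + x ≠ 0 := by linarith
  have hs : √(2 * x + 1) ≠ 0 := (Real.sqrt_pos.mpr hx).ne'
  have hsq : √(2 * x + 1) ^ 2 = 2 * x + 1 := Real.sq_sqrt hx.le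
  have hden := (hasDerivAt_sqrt_two_mul_add_one hx).fun_mul
    (((hasDerivAt_id' x).const_add 1).fun_pow 2)
  refine ((hasDerivAt_id' x).fun_div hden
    (mul_ne_zero hs (pow_ne_zero 2 hx'))).fun_neg.congr_deriv ?_
  field_simp
  linear_combination (x ^ 2 - 1) * hsq

lemma hasDerivAt_fα (hx : x ≠ 0) (hx' : 0 < 2 * x + 1) :
    HasDerivAt (fα α) (-(x * (1 + x))⁻¹ - α * -(x / (√(2 * x + 1) * (1 + x) ^ 2))) x := by
  have hfα : fα α = fun y ↦ Real.log (1 + 1 / y) - α * (√(2 * y + 1) / (1 + y)) :=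
    funext fun y ↦ by rw [fα, mul_div_assoc]
  rw [hfα]
  exact (hasDerivAt_log_one_add_one_div hx (by linarith)).fun_sub
    ((hasDerivAt_sqrt_div_one_add hx').const_mul α)

lemma hasDerivAt_deriv_fα (hx : x ≠ 0) (hx' : 0 < 2 * x + 1) :
    HasDerivAt (fun y ↦ -(y * (1 + y))⁻¹ - α * -(y / (√(2 * y + 1) * (1 + y) ^ 2)))
      ((2 * x + 1) / (x * (1 + x)) ^ 2 -
        α * ((3 * x ^ 2 - 1) / (√(2 * x + 1) * (1 + x)) ^ 3)) x :=
  (hasDerivAt_neg_inv_mul_one_add hx (by linarith)).fun_sub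
    ((hasDerivAt_neg_div_sqrt_mul_one_add_sq hx').const_mul α)

lemma g_le_one_add_one_div_div_sqrt (hx : 0 < x) : g x ≤ (1 + 1 / x) / √(2 * x + 1) := by
  have hlog : Real.log (1 + 1 / x) ≤ 1 / x := by
    linarith [Real.log_le_sub_one_of_pos (show 0 < 1 + 1 / x by positivity)]
  calc g x ≤ (1 + x) * (1 / x) / √(2 * x + 1) := by unfold g; gcongr
    _ = (1 + 1 / x) / √(2 * x + 1) := by field_simp; ring

lemma antitoneOn_one_add_one_div_div_sqrt :
    AntitoneOn (fun x : ℝ ↦ (1 + 1 / x) / √(2 * x + 1)) (Ioi 0) := by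
  intro x (hx : 0 < x) y (_ : 0 < y) hxy
  dsimp only
  gcongr

lemma mul_div_sqrt_mul_one_add_cube_le (hα : 0 ≤ α) (hx : 0 < x)
    (h : α ≤ (1 + 1 / x) / √(2 * x + 1)) :
    α * ((3 * x ^ 2 - 1) / (√(2 * x + 1) * (1 + x)) ^ 3) ≤
      (2 * x + 1) / (x * (1 + x)) ^ 2 := by
  have hs4 : √(2 * x + 1) ^ 4 = (2 * x + 1) ^ 2 := by
    rw [show 4 = 2 * 2 from rfl, pow_mul, Real.sq_sqrt (by positivity)]
  have hcube : 3 * x ^ 3 ≤ (2 * x + 1) ^ 3 := by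
    have : 0 < x ^ 3 := by positivity
    nlinarith
  calc α * ((3 * x ^ 2 - 1) / (√(2 * x + 1) * (1 + x)) ^ 3)
    _ ≤ α * (3 * x ^ 2 / (√(2 * x + 1) * (1 + x)) ^ 3) := by gcongr; linarith
    _ ≤ (1 + 1 / x) / √(2 * x + 1) * (3 * x ^ 2 / (√(2 * x + 1) * (1 + x)) ^ 3) := by gcongr
    _ = 3 * x / (√(2 * x + 1) ^ 4 * (1 + x) ^ 2) := by field_simp; ring
    _ = 3 * x ^ 3 / ((2 * x + 1) ^ 2 * (x * (1 + x)) ^ 2) := by rw [hs4]; field_simp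
    _ ≤ (2 * x + 1) ^ 3 / ((2 * x + 1) ^ 2 * (x * (1 + x)) ^ 2) := by gcongr
    _ = (2 * x + 1) / (x * (1 + x)) ^ 2 := by field_simp

theorem convexOn_fα (hα : 0 ≤ α) (h : α ≤ (1 + 1 / x₀) / √(2 * x₀ + 1)) :
    ConvexOn ℝ (Ioc 0 x₀) (fα α) := by
  have hpos {x : ℝ} (hx : x ∈ interior (Ioc 0 x₀)) : 0 < x := (interior_subset hx).1
  refine convexOn_of_hasDerivWithinAt2_nonneg (convex_Ioc 0 x₀)
    (fun x hx ↦ (hasDerivAt_fα hx.1.ne' (by linarith [hx.1])).continuousAt.continuousWithinAt)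
    (fun x hx ↦ (hasDerivAt_fα (hpos hx).ne' (by linarith [hpos hx])).hasDerivWithinAt)
    (fun x hx ↦ (hasDerivAt_deriv_fα (hpos hx).ne' (by linarith [hpos hx])).hasDerivWithinAt)
    fun x hx ↦ ?_
  obtain ⟨hx0, hxx₀⟩ : x ∈ Ioc 0 x₀ := interior_subset hx
  have hαx : α ≤ (1 + 1 / x) / √(2 * x + 1) :=
    h.trans (antitoneOn_one_add_one_div_div_sqrt hx0 (hx0.trans_le hxx₀) hxx₀)
  exact sub_nonneg.mpr (mul_div_sqrt_mul_one_add_cube_le hα hx0 hαx)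

end Convexity

/-- Jensen's inequality for the ergodic finite-blocklength rate (inequality (16) of
the paper): if `α ≥ 0`, `x₀ > 0` with `α ≤ g(x₀)`, and `X` is an integrable random
variable on a probability space with `0 < X ≤ x₀` almost everywhere, then
`E[f_α(X)] ≥ f_α(E[X])`, where the expectation of the (a.e. nonnegative) random
variable `f_α(X)` is taken in the extended sense. -/
theorem ergodic_rate_jensen (α x₀ : ℝ) (hα : 0 ≤ α) (hx₀ : 0 < x₀) (hg : α ≤ g x₀)
    {Ω : Type*} [MeasurableSpace Ω] (μ : Measure Ω) [IsProbabilityMeasure μ]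
    (X : Ω → ℝ) (hX : Integrable X μ)
    (hbound : ∀ᵐ ω ∂μ, X ω ∈ Set.Ioc 0 x₀) :
    ENNReal.ofReal (fα α (∫ ω, X ω ∂μ)) ≤ ∫⁻ ω, ENNReal.ofReal (fα α (X ω)) ∂μ := by
  have hconv : ConvexOn ℝ (Ioc 0 x₀) (fα α) :=
    convexOn_fα hα (hg.trans (g_le_one_add_one_div_div_sqrt hx₀))
  exact ofReal_map_integral_le_lintegral_of_convexOn hconv hX hbound
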